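/- The pushforward along co-Kleisli (shared-randomness) composition is not functorial: there exist a Borel probability measure μ on ℝ, jointly measurable functions f, f' : ℝ × ℝ → ℝ, and a point x ∈ ℝ such that the pushforward of μ along the map ω ↦ f'(ω, f(ω, x)) is not equal to the bind of the pushforward measure (f(·,x))_*μ with the family y ↦ (f'(·,y))_*μ. -/

import Mathlib

open MeasureTheory

/-- The pushforwards of an s-finite measure along the sections of a jointly measurable function form
a measurable family. -/
theorem measurable_map_section {Ω α β : Type*} [MeasurableSpace Ω] [MeasurableSpace α]
    [MeasurableSpace β] (μ : Measure Ω) [SFinite μ] {g : Ω × α → β} (hg : Measurable g) :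
    Measurable fun y => Measure.map (fun ω => g (ω, y)) μ := by
  refine Measure.measurable_of_measurable_coe _ fun s hs => ?_
  have h : ∀ y, Measure.map (fun ω => g (ω, y)) μ s = μ ((fun ω => (ω, y)) ⁻¹' (g ⁻¹' s)) :=
    fun y => Measure.map_apply (hg.comp measurable_prodMk_right) hs
  simp_rw [h]
  exact measurable_measure_prodMk_right (hg hs)

/-- The pushforward along co-Kleisli (shared-randomness) composition is not functorial:
there are a Borel probability measure `μ` on `ℝ`, jointly measurable `f, f' : ℝ × ℝ → ℝ`
and a point `x` such that the pushforward of `μ` along `ω ↦ f' (ω, f (ω, x))` differs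
from the bind of `(f (·, x))_* μ` with the family `y ↦ (f' (·, y))_* μ`. -/
theorem coKleisli_pushforward_not_functorial :
    ∃ (μ : Measure ℝ), IsProbabilityMeasure μ ∧
      ∃ (f f' : ℝ × ℝ → ℝ) (x : ℝ),
        Measurable f ∧ Measurable f' ∧
        Measure.map (fun ω => f' (ω, f (ω, x))) μ
          ≠ (Measure.map (fun ω => f (ω, x)) μ).bind
              (fun y => Measure.map (fun ω => f' (ω, y)) μ) := by
  have hμ : IsProbabilityMeasure (volume.restrict (Set.Icc (0 : ℝ) 1)) := ⟨by simp⟩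
  have hsub : Measurable fun p : ℝ × ℝ => p.1 - p.2 := measurable_fst.sub measurable_snd
  refine ⟨volume.restrict (Set.Icc 0 1), hμ, Prod.fst, fun p => p.1 - p.2, 0,
    measurable_fst, hsub, fun h => ?_⟩
  have h0 := congrArg (fun ν : Measure ℝ => ν {0}) h
  have hatom : ∀ y : ℝ,
      Measure.map (fun ω => ω - y) (volume.restrict (Set.Icc (0 : ℝ) 1)) {0} = 0 := fun y => by
    rw [Measure.map_apply (by fun_prop) (measurableSet_singleton 0)]
    have hpre : (fun ω : ℝ => ω - y) ⁻¹' {0} = {y} := by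
      ext ω
      simp [sub_eq_zero]
    rw [hpre]
    exact measure_singleton y
  dsimp only at h0
  rw [Measure.bind_apply (measurableSet_singleton 0)
    (measurable_map_section _ hsub).aemeasurable] at h0
  simp [hatom] at h0
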